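/- Let (i,j) ∈ E be an edge of a finite connected simple graph G. With α_⋆ = α_min if c_OR-0(i,j) ≥ 0 and α_⋆ = α_max if c_OR-0(i,j) ≤ 0 (either choice when c_OR-0(i,j) = 0), one has c_OR(i,j) ≥ (1−α_⋆)·c_OR-0(i,j) − Δ_ij(α). -/

import Mathlib

namespace Curv

open Finset

noncomputable section

variable {V : Type*} [Fintype V] [DecidableEq V] (G : SimpleGraph V) [DecidableRel G.Adj]

/-- `μ` is a probability distribution on the (finite) vertex set. -/
def IsProb (μ : V → ℝ) : Prop := (∀ x, 0 ≤ μ x) ∧ ∑ x, μ x = 1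

/-- `π` is a coupling of `μ` and `ν`. -/
def IsCoupling (μ ν : V → ℝ) (π : V → V → ℝ) : Prop :=
  (∀ x y, 0 ≤ π x y) ∧ (∀ x, ∑ y, π x y = μ x) ∧ (∀ y, ∑ x, π x y = ν y)

/-- Transport cost of a plan `π` with respect to the shortest-path graph distance. -/
def cost (π : V → V → ℝ) : ℝ := ∑ x, ∑ y, (G.dist x y : ℝ) * π x y

/-- Wasserstein-1 distance between two distributions on the vertex set. -/
def W1 (μ ν : V → ℝ) : ℝ := sInf {c : ℝ | ∃ π, IsCoupling μ ν π ∧ cost G π = c}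

/-- Dirac mass at `u`. -/
def dirac (u : V) : V → ℝ := fun x => if x = u then 1 else 0

/-- Uniform distribution on the neighbours of `u`. -/
def unif (u : V) : V → ℝ := fun x => if G.Adj u x then ((G.degree u : ℝ))⁻¹ else 0

/-- Lazy random-walk measure with laziness parameter `α`. -/
def mGen (α : ℝ) (u : V) : V → ℝ := fun x => α * dirac u x + (1 - α) * unif G u x

/-- Canonical laziness `1/(deg u + 1)`. -/
def alphaL (u : V) : ℝ := ((G.degree u : ℝ) + 1)⁻¹

/-- The lazy random-walk measure `m_u`. -/
def mLazy (u : V) : V → ℝ := mGen G (alphaL G u) u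

/-- Ollivier–Ricci curvature (lazy). -/
def cOR (i j : V) : ℝ := 1 - W1 G (mLazy G i) (mLazy G j)

/-- Non-lazy Ollivier–Ricci curvature. -/
def cOR0 (i j : V) : ℝ := 1 - W1 G (unif G i) (unif G j)

/-- Positive part `[x]₊`. -/
def pos (x : ℝ) : ℝ := max x 0

/-- Triangle count `△(u,v)`. -/
def tri (u v : V) : ℕ := (G.neighborFinset u ∩ G.neighborFinset v).card

/-- Unique neighbours `N(u) \ (N(v) ∪ {v})`. -/
def uniq (u v : V) : Finset V := G.neighborFinset u \ insert v (G.neighborFinset v)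

/-- `ξ_u(u,v)`: unique neighbours of `u` having a neighbour among unique neighbours of `v`. -/
def xiSet (u v : V) : Finset V := (uniq G u v).filter fun k => ∃ w ∈ uniq G v u, G.Adj k w

/-- `Ξ_uv`. -/
def Xi (u v : V) : ℕ := (xiSet G u v).card + (xiSet G v u).card

/-- `□̃(k,u,v) = |N(k) ∩ (N(v)\(N(u)∪{u}))|`. -/
def boxT (k u v : V) : ℕ := (G.neighborFinset k ∩ uniq G v u).card

/-- `ϖ_max(u,v)`. -/
def varpi (u v : V) : ℕ :=
  max (((G.neighborFinset u).erase v).sup fun k => boxT G k u v)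
      (((G.neighborFinset v).erase u).sup fun w => boxT G w v u)

/-- `þ_max(u,v) = ϖ_max(u,v)·max{ρ_u,ρ_v}`. -/
def thMax (u v : V) : ℕ := varpi G u v * max (G.degree u) (G.degree v)

/-- Edgewise 4-cycle coefficient `C₄(u,v)`. -/
def C4 (u v : V) : ℝ := if 0 < Xi G u v then (Xi G u v : ℝ) / (thMax G u v : ℝ) else 0

/-- Graph-wide 4-cycle constant `C₄(G)`. -/
def C4Graph : ℝ := sSup {x : ℝ | ∃ u v, G.Adj u v ∧ x = C4 G u v}

def rhoMin (i j : V) : ℕ := min (G.degree i) (G.degree j)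

def rhoMax (i j : V) : ℕ := max (G.degree i) (G.degree j)

/-- `𝔖(i,j)`. -/
def frakS (i j : V) : ℝ := 2 / (G.degree i : ℝ) + 2 / (G.degree j : ℝ) - 2

/-- `𝔗(i,j)`. -/
def frakT (i j : V) : ℝ := 2 / (rhoMax G i j : ℝ) + 1 / (rhoMin G i j : ℝ)

/-- `𝔎(i,j)`. -/
def frakK (i j : V) : ℝ := 1 - 1 / (rhoMin G i j : ℝ) - 1 / (rhoMax G i j : ℝ)

/-- `Z_min(i,j)`. -/
def Zmin (i j : V) : ℝ := (tri G i j : ℝ) / (rhoMin G i j : ℝ)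

/-- `Z_max(i,j)`. -/
def Zmax (i j : V) : ℝ := (tri G i j : ℝ) / (rhoMax G i j : ℝ)

/-- Balanced Forman curvature. -/
def cBF (i j : V) : ℝ :=
  if rhoMin G i j = 1 then 0
  else frakS G i j + frakT G i j * (tri G i j : ℝ) + C4 G i j

/-- `M` is a matching in the cross-edge bipartite graph `B_ij`. -/
def IsCrossMatching (i j : V) (M : Finset (V × V)) : Prop :=
  (∀ p ∈ M, p.1 ∈ uniq G i j ∧ p.2 ∈ uniq G j i ∧ G.Adj p.1 p.2) ∧
  (∀ p ∈ M, ∀ q ∈ M, p ≠ q → p.1 ≠ q.1 ∧ p.2 ≠ q.2)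

/-- Maximum matching size `𝔪(i,j)` in the cross-edge bipartite graph. -/
def matchNum (i j : V) : ℕ :=
  sSup {n : ℕ | ∃ M : Finset (V × V), IsCrossMatching G i j M ∧ M.card = n}

/-- `𝒮(i,j) = 𝔪(i,j)/ρ_max`. -/
def SS (i j : V) : ℝ := (matchNum G i j : ℝ) / (rhoMax G i j : ℝ)

/-- Lazy per-neighbour weight `w_u = (1-α)/ρ_u`. -/
def wA (α : ℝ) (u : V) : ℝ := (1 - α) / (G.degree u : ℝ)

/-- Lazy conductance sum `Σ`. -/
def SigmaA (αi αj : ℝ) (i j : V) : ℝ :=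
  (G.degree i : ℝ) / (1 - αi) + (G.degree j : ℝ) / (1 - αj)

/-- `Const_α`. -/
def ConstA (αi αj : ℝ) (i j : V) : ℝ :=
  -1 + 2 * (min αi ((1 - αj) / (G.degree j : ℝ)) + min αj ((1 - αi) / (G.degree i : ℝ)))
    + (pos (αi - (1 - αj) / (G.degree j : ℝ)) + pos ((1 - αj) / (G.degree j : ℝ) - αi)
      + pos (αj - (1 - αi) / (G.degree i : ℝ)) + pos ((1 - αi) / (G.degree i : ℝ) - αj))
    + ((G.degree i : ℝ) + (G.degree j : ℝ) - 2) / SigmaA G αi αj i j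

/-- `Slope_α`. -/
def SlopeA (αi αj : ℝ) (i j : V) : ℝ := wA G αi i + wA G αj j - 2 / SigmaA G αi αj i j

/-- `α_⋆`: `α_min` when the non-lazy curvature is nonnegative, `α_max` otherwise. -/
def alphaStar (i j : V) : ℝ :=
  if 0 ≤ cOR0 G i j then min (alphaL G i) (alphaL G j) else max (alphaL G i) (alphaL G j)

/-- `Δ_ij(α) = α_max − α_min` for the canonical laziness. -/
def DeltaL (i j : V) : ℝ := max (alphaL G i) (alphaL G j) - min (alphaL G i) (alphaL G j)

/-!
Let `a ≤ b` be the two laziness parameters, with `a` at `i`. Splitting the lazy measures as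
`m_i = a δ_i + (1 - b) ν_i + (b - a) ν_i` and `m_j = a δ_j + (1 - b) ν_j + (b - a) δ_j` and
transporting summand by summand gives `W₁(m_i, m_j) ≤ a + (1 - b) W + (b - a) D`, where
`W = W₁(ν_i, ν_j)` and `D = W₁(ν_i, δ_j)`. Neighbours of `i` are within distance `2` of `j`, so
`D ≤ 2`, and the triangle inequality through `ν_j` gives `D ≤ W + 1`. Weighting the two bounds by
`α⋆ - a` and `b - α⋆` gives the claim for every `α⋆ ∈ [a, b]`.
-/

section Coupling

omit [DecidableEq V] [DecidableRel G.Adj]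

theorem IsProb.isCoupling_mul {μ ν : V → ℝ} (hμ : IsProb μ) (hν : IsProb ν) :
    IsCoupling μ ν fun x y => μ x * ν y :=
  ⟨fun x y => mul_nonneg (hμ.1 x) (hν.1 y),
    fun x => by rw [← mul_sum, hν.2, mul_one],
    fun y => by rw [← sum_mul, hμ.2, one_mul]⟩

namespace IsCoupling

variable {μ μ' ν ν' : V → ℝ} {π π' : V → V → ℝ}

theorem swap (h : IsCoupling μ ν π) : IsCoupling ν μ fun x y => π y x :=
  ⟨fun x y => h.1 y x, h.2.2, h.2.1⟩

theorem add (h : IsCoupling μ ν π) (h' : IsCoupling μ' ν' π') :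
    IsCoupling (μ + μ') (ν + ν') (π + π') :=
  ⟨fun x y => add_nonneg (h.1 x y) (h'.1 x y),
    fun x => by simp only [Pi.add_apply, sum_add_distrib, h.2.1, h'.2.1],
    fun y => by simp only [Pi.add_apply, sum_add_distrib, h.2.2, h'.2.2]⟩

theorem smul {c : ℝ} (hc : 0 ≤ c) (h : IsCoupling μ ν π) : IsCoupling (c • μ) (c • ν) (c • π) :=
  ⟨fun x y => mul_nonneg hc (h.1 x y),
    fun x => by simp only [Pi.smul_apply, ← smul_sum, h.2.1],
    fun y => by simp only [Pi.smul_apply, ← smul_sum, h.2.2]⟩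

theorem le_left (h : IsCoupling μ ν π) (x y : V) : π x y ≤ μ x :=
  h.2.1 x ▸ single_le_sum (fun y _ => h.1 x y) (mem_univ y)

theorem le_right (h : IsCoupling μ ν π) (x y : V) : π x y ≤ ν y :=
  h.swap.le_left y x

theorem eq_zero_of_right_eq_zero (h : IsCoupling μ ν π) (x : V) {y : V} (hy : ν y = 0) :
    π x y = 0 :=
  le_antisymm (hy ▸ h.le_right x y) (h.1 x y)

theorem cost_nonneg (h : IsCoupling μ ν π) : 0 ≤ cost G π :=
  sum_nonneg fun x _ => sum_nonneg fun y _ => mul_nonneg (Nat.cast_nonneg _) (h.1 x y)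

end IsCoupling

theorem cost_swap (π : V → V → ℝ) : cost G (fun x y => π y x) = cost G π := by
  simp only [cost]
  rw [sum_comm]
  simp only [G.dist_comm]

theorem cost_add (π π' : V → V → ℝ) : cost G (π + π') = cost G π + cost G π' := by
  simp only [cost, Pi.add_apply, mul_add, sum_add_distrib]

theorem cost_smul (c : ℝ) (π : V → V → ℝ) : cost G (c • π) = c * cost G π := by
  simp only [cost, Pi.smul_apply, smul_eq_mul, mul_sum, mul_left_comm]

theorem continuous_cost : Continuous (cost G) := by
  unfold cost
  fun_prop

theorem isCompact_setOf_isCoupling (μ ν : V → ℝ) : IsCompact {π | IsCoupling μ ν π} := by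
  refine (isCompact_Icc (a := 0) (b := fun x _ => μ x)).of_isClosed_subset ?_
    fun π hπ => ⟨hπ.1, hπ.le_left⟩
  simp only [IsCoupling, Set.ofPred_and, Set.ofPred_forall]
  refine .inter ?_ (.inter ?_ ?_)
  · exact isClosed_iInter fun x => isClosed_iInter fun y => isClosed_le (by fun_prop) (by fun_prop)
  all_goals exact isClosed_iInter fun x => isClosed_eq (by fun_prop) (by fun_prop)

end Coupling

section Wasserstein

omit [DecidableEq V] [DecidableRel G.Adj]

variable {μ ν : V → ℝ}

theorem IsCoupling.W1_le_cost {π : V → V → ℝ} (h : IsCoupling μ ν π) : W1 G μ ν ≤ cost G π := by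
  refine csInf_le ⟨0, ?_⟩ ⟨π, h, rfl⟩
  rintro _ ⟨π', h', rfl⟩
  exact h'.cost_nonneg G

theorem exists_isCoupling_cost_eq_W1 (hμ : IsProb μ) (hν : IsProb ν) :
    ∃ π, IsCoupling μ ν π ∧ cost G π = W1 G μ ν :=
  ((isCompact_setOf_isCoupling μ ν).image (continuous_cost G)).sInf_mem
    ⟨_, _, hμ.isCoupling_mul hν, rfl⟩

theorem W1_comm (μ ν : V → ℝ) : W1 G μ ν = W1 G ν μ := by
  have swap_costs (μ ν : V → ℝ) : {c | ∃ π, IsCoupling μ ν π ∧ cost G π = c} ⊆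
      {c | ∃ π, IsCoupling ν μ π ∧ cost G π = c} := by
    rintro _ ⟨π, hπ, rfl⟩
    exact ⟨_, hπ.swap, cost_swap G π⟩
  exact congrArg sInf ((swap_costs μ ν).antisymm (swap_costs ν μ))

end Wasserstein

section Dirac

omit [DecidableRel G.Adj]

variable {μ ν : V → ℝ} {u v : V}

omit [Fintype V] in
theorem dirac_of_ne (h : u ≠ v) : dirac v u = 0 :=
  if_neg h

theorem isProb_dirac (u : V) : IsProb (dirac u) :=
  ⟨fun x => by unfold dirac; split_ifs <;> norm_num, by simp [dirac]⟩

theorem IsCoupling.cost_dirac_right {π : V → V → ℝ} (h : IsCoupling μ (dirac v) π) :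
    cost G π = ∑ x, (G.dist x v : ℝ) * μ x := by
  refine sum_congr rfl fun x _ => ?_
  rw [← h.2.1 x, mul_sum]
  refine sum_congr rfl fun y _ => ?_
  obtain rfl | hy := eq_or_ne y v
  · rfl
  · rw [h.eq_zero_of_right_eq_zero x (dirac_of_ne hy), mul_zero, mul_zero]

theorem W1_dirac_right (hμ : IsProb μ) (v : V) :
    W1 G μ (dirac v) = ∑ x, (G.dist x v : ℝ) * μ x := by
  obtain ⟨π, hπ, hcost⟩ := exists_isCoupling_cost_eq_W1 G hμ (isProb_dirac v)
  rw [← hcost, hπ.cost_dirac_right]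

theorem W1_dirac_dirac (u v : V) : W1 G (dirac u) (dirac v) = G.dist u v := by
  simp [W1_dirac_right G (isProb_dirac u), dirac]

theorem W1_dirac_right_le {r : ℝ} (hμ : IsProb μ) (hr : ∀ x, μ x ≠ 0 → G.dist x v ≤ r) :
    W1 G μ (dirac v) ≤ r :=
  calc W1 G μ (dirac v) = ∑ x, (G.dist x v : ℝ) * μ x := W1_dirac_right G hμ v
    _ ≤ ∑ x, r * μ x := by
      refine sum_le_sum fun x _ => ?_
      obtain hx | hx := eq_or_ne (μ x) 0
      · simp [hx]
      · exact mul_le_mul_of_nonneg_right (hr x hx) (hμ.1 x)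
    _ = r := by rw [← mul_sum, hμ.2, mul_one]

-- `G.dist` is `0` across components, so its triangle inequality can fail there.
theorem W1_dirac_right_le_add (hμ : IsProb μ) (hν : IsProb ν)
    (hv : ∀ y, ν y ≠ 0 → G.Reachable y v) :
    W1 G μ (dirac v) ≤ W1 G μ ν + W1 G ν (dirac v) := by
  obtain ⟨π, hπ, hcost⟩ := exists_isCoupling_cost_eq_W1 G hμ hν
  have dist_mul_le (x y : V) : (G.dist x v : ℝ) * π x y ≤ (G.dist x y + G.dist y v) * π x y := by
    obtain hy | hy := eq_or_ne (ν y) 0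
    · simp [hπ.eq_zero_of_right_eq_zero x hy]
    · exact mul_le_mul_of_nonneg_right
        (mod_cast (hv y hy).dist_triangle_right x) (hπ.1 x y)
  calc W1 G μ (dirac v) = ∑ x, ∑ y, (G.dist x v : ℝ) * π x y := by
        simp only [W1_dirac_right G hμ, ← mul_sum, hπ.2.1]
    _ ≤ ∑ x, ∑ y, (G.dist x y + G.dist y v : ℝ) * π x y :=
        sum_le_sum fun x _ => sum_le_sum fun y _ => dist_mul_le x y
    _ = cost G π + ∑ y, ∑ x, (G.dist y v : ℝ) * π x y := by
        rw [sum_comm (f := fun y x => (G.dist y v : ℝ) * π x y)]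
        simp only [cost, add_mul, sum_add_distrib]
    _ = W1 G μ ν + W1 G ν (dirac v) := by
        simp only [hcost, W1_dirac_right G hν, ← mul_sum, hπ.2.2]

end Dirac

section LazyMeasure

/-- The measure `m_u = α δ_u + (1 - α) ν` of a random walk that stays at `u` with probability `α`
and otherwise moves according to `ν`. -/
def lazyMeasure (α : ℝ) (u : V) (ν : V → ℝ) : V → ℝ :=
  fun x => α * dirac u x + (1 - α) * ν x

omit [DecidableRel G.Adj]

variable {a b : ℝ} {μ ν : V → ℝ} {i j : V}

theorem W1_lazyMeasure_le (ha : 0 ≤ a) (hab : a ≤ b) (hb : b ≤ 1) (hμ : IsProb μ)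
    (hν : IsProb ν) (i j : V) :
    W1 G (lazyMeasure a i μ) (lazyMeasure b j ν) ≤
      a * G.dist i j + (1 - b) * W1 G μ ν + (b - a) * W1 G μ (dirac j) := by
  obtain ⟨π₁, hπ₁, hcost₁⟩ := exists_isCoupling_cost_eq_W1 G (isProb_dirac i) (isProb_dirac j)
  obtain ⟨π₂, hπ₂, hcost₂⟩ := exists_isCoupling_cost_eq_W1 G hμ hν
  obtain ⟨π₃, hπ₃, hcost₃⟩ := exists_isCoupling_cost_eq_W1 G hμ (isProb_dirac j)
  have split_left : lazyMeasure a i μ = a • dirac i + (1 - b) • μ + (b - a) • μ := by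
    ext x; simp only [lazyMeasure, Pi.add_apply, Pi.smul_apply, smul_eq_mul]; ring
  have split_right : lazyMeasure b j ν = a • dirac j + (1 - b) • ν + (b - a) • dirac j := by
    ext x; simp only [lazyMeasure, Pi.add_apply, Pi.smul_apply, smul_eq_mul]; ring
  have hπ : IsCoupling (lazyMeasure a i μ) (lazyMeasure b j ν)
      (a • π₁ + (1 - b) • π₂ + (b - a) • π₃) := by
    rw [split_left, split_right]
    exact ((hπ₁.smul ha).add (hπ₂.smul (sub_nonneg.2 hb))).add (hπ₃.smul (sub_nonneg.2 hab))
  simpa only [cost_add, cost_smul, hcost₁, hcost₂, hcost₃, W1_dirac_dirac] using hπ.W1_le_cost G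

theorem W1_dirac_right_le_two_of_adj (hij : G.Adj i j) (hμ : IsProb μ)
    (hsμ : ∀ x, ¬G.Adj i x → μ x = 0) : W1 G μ (dirac j) ≤ 2 := by
  refine W1_dirac_right_le G hμ fun x hx => ?_
  have hix : G.Adj i x := not_imp_comm.1 (hsμ x) hx
  exact_mod_cast SimpleGraph.dist_le (.cons hix.symm (.cons hij .nil))

theorem W1_dirac_right_le_W1_add_one (hμ : IsProb μ) (hν : IsProb ν)
    (hsν : ∀ y, ¬G.Adj j y → ν y = 0) : W1 G μ (dirac j) ≤ W1 G μ ν + 1 := by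
  have adj_of_ne_zero (y : V) (hy : ν y ≠ 0) : G.Adj y j := (not_imp_comm.1 (hsν y) hy).symm
  have hνj : W1 G ν (dirac j) ≤ 1 := W1_dirac_right_le G hν fun y hy =>
    mod_cast (SimpleGraph.dist_eq_one_iff_adj.2 (adj_of_ne_zero y hy)).le
  have := W1_dirac_right_le_add G hμ hν fun y hy => (adj_of_ne_zero y hy).reachable
  linarith

theorem curvature_lazyMeasure_ge_of_le (hij : G.Adj i j) (ha : 0 ≤ a) (hb : b ≤ 1)
    (hμ : IsProb μ) (hν : IsProb ν) (hsμ : ∀ x, ¬G.Adj i x → μ x = 0)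
    (hsν : ∀ y, ¬G.Adj j y → ν y = 0) {t : ℝ} (ht : t ∈ Set.Icc a b) :
    1 - W1 G (lazyMeasure a i μ) (lazyMeasure b j ν) ≥ (1 - t) * (1 - W1 G μ ν) - (b - a) := by
  have hlazy := W1_lazyMeasure_le G ha (ht.1.trans ht.2) hb hμ hν i j
  rw [SimpleGraph.dist_eq_one_iff_adj.2 hij, Nat.cast_one, mul_one] at hlazy
  have weighted_two := mul_le_mul_of_nonneg_left
    (W1_dirac_right_le_two_of_adj G hij hμ hsμ) (sub_nonneg.2 ht.1)
  have weighted_add_one := mul_le_mul_of_nonneg_left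
    (W1_dirac_right_le_W1_add_one G hμ hν hsν) (sub_nonneg.2 ht.2)
  linarith

theorem stmt4_general (i j : V) (hij : G.Adj i j)
    (αi αj : ℝ) (hαi : αi ∈ Set.Icc (0 : ℝ) 1) (hαj : αj ∈ Set.Icc (0 : ℝ) 1)
    (νi νj : V → ℝ) (hνi : IsProb νi) (hνj : IsProb νj)
    (hsi : ∀ x, ¬ G.Adj i x → νi x = 0) (hsj : ∀ x, ¬ G.Adj j x → νj x = 0)
    (αstar : ℝ) (hstar : αstar ∈ Set.Icc (min αi αj) (max αi αj)) :
    1 - W1 G (lazyMeasure αi i νi) (lazyMeasure αj j νj)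
      ≥ (1 - αstar) * (1 - W1 G νi νj) - (max αi αj - min αi αj) := by
  rcases le_total αi αj with hle | hle
  · rw [min_eq_left hle, max_eq_right hle] at *
    exact curvature_lazyMeasure_ge_of_le G hij hαi.1 hαj.2 hνi hνj hsi hsj hstar
  · rw [min_eq_right hle, max_eq_left hle] at *
    rw [W1_comm G νi, W1_comm G (lazyMeasure αi i νi)]
    exact curvature_lazyMeasure_ge_of_le G hij.symm hαj.1 hαi.2 hνj hνi hsj hsi hstar

end LazyMeasure

/-- the piecewise choice `α_⋆` yields
`c_OR ≥ (1−α_⋆)·c_OR-0 − Δ_ij(α)` (either choice allowed when `c_OR-0 = 0`). -/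
theorem stmt4 (hG : G.Connected) (i j : V) (hij : G.Adj i j)
    (αi αj : ℝ) (hαi : αi ∈ Set.Icc (0:ℝ) 1) (hαj : αj ∈ Set.Icc (0:ℝ) 1)
    (νi νj : V → ℝ) (hνi : IsProb νi) (hνj : IsProb νj)
    (hsi : ∀ x, ¬ G.Adj i x → νi x = 0) (hsj : ∀ x, ¬ G.Adj j x → νj x = 0)
    (αstar : ℝ)
    (hstar : (0 ≤ 1 - W1 G νi νj ∧ αstar = min αi αj) ∨
             (1 - W1 G νi νj ≤ 0 ∧ αstar = max αi αj)) :
    1 - W1 G (fun x => αi * dirac i x + (1 - αi) * νi x)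
          (fun x => αj * dirac j x + (1 - αj) * νj x)
      ≥ (1 - αstar) * (1 - W1 G νi νj) - (max αi αj - min αi αj) := by
  refine stmt4_general G i j hij αi αj hαi hαj νi νj hνi hνj hsi hsj αstar ?_
  rcases hstar with ⟨-, rfl⟩ | ⟨-, rfl⟩ <;> simp

end

end Curv
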